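/- Let a₀ > 0, let ψ be continuous and strictly positive on (0, a₀], and suppose x ↦ 1/ψ(x) is integrable on (0, a₀). Set t_s = ∫₀^{a₀} (1/ψ(x)) dx. If a : [0, t_s) → (0, a₀] is differentiable with a(0) = a₀ and a'(t) = −ψ(a(t)) for all t ∈ [0, t_s), then a(t) → 0 as t → t_s⁻. -/

import Mathlib

/-!
The trajectory `a` is strictly decreasing, and the change of variables `x = a t` turns the integral
of `1 / ψ` over the range of `a` into the length `t_s` of the time interval, which is also the
integral of `1 / ψ` over all of `(0, a₀]`. Since `1 / ψ` is positive, the range of `a` must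
therefore meet every interval `(0, ε)`, and monotonicity gives the limit.
-/

open MeasureTheory Set Filter Topology

theorem setIntegral_image_eq_measureReal_of_abs_deriv_mul_eq_one {f f' g : ℝ → ℝ} {s : Set ℝ}
    (hs : MeasurableSet s) (hf' : ∀ t ∈ s, HasDerivWithinAt f (f' t) s t) (hf : InjOn f s)
    (hg : ∀ t ∈ s, |f' t| * g (f t) = 1) :
    ∫ x in f '' s, g x = volume.real s := by
  calc ∫ x in f '' s, g x
      = ∫ t in s, |f' t| • g (f t) := integral_image_eq_integral_abs_deriv_smul hs hf' hf g
    _ = ∫ _ in s, (1 : ℝ) := setIntegral_congr_fun hs hg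
    _ = volume.real s := by simp

theorem setIntegral_lt_setIntegral_of_disjoint {α : Type*} [MeasurableSpace α] {μ : Measure α}
    {f : α → ℝ} {s t u : Set α} (ht : MeasurableSet t) (hu : MeasurableSet u)
    (hf : ∀ x ∈ t, 0 < f x) (hfi : IntegrableOn f t μ) (hst : s ⊆ t) (hut : u ⊆ t)
    (hsu : Disjoint s u) (hμu : 0 < μ u) :
    ∫ x in s, f x ∂μ < ∫ x in t, f x ∂μ := by
  have hs_le : ∫ x in s, f x ∂μ ≤ ∫ x in t \ u, f x ∂μ :=
    setIntegral_mono_set (hfi.mono_set sdiff_subset)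
      (ae_restrict_of_forall_mem (ht.diff hu) fun x hx ↦ (hf x hx.1).le)
      (subset_sdiff.2 ⟨hst, hsu⟩).eventuallyLE
  have hu_pos : 0 < ∫ x in u, f x ∂μ := by
    rw [setIntegral_pos_iff_support_of_nonneg_ae
      (ae_restrict_of_forall_mem hu fun x hx ↦ (hf x (hut hx)).le) (hfi.mono_set hut)]
    have hsupp : u ⊆ Function.support f := fun x hx ↦ (hf x (hut hx)).ne'
    rwa [inter_eq_right.2 hsupp]
  have hdiff : ∫ x in t \ u, f x ∂μ = ∫ x in t, f x ∂μ - ∫ x in u, f x ∂μ :=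
    setIntegral_sdiff hu hfi hut
  linarith

theorem isGLB_of_setIntegral_eq_setIntegral_Ioc {f : ℝ → ℝ} {s : Set ℝ} {b c : ℝ} (hbc : b < c)
    (hf : ∀ x ∈ Ioc b c, 0 < f x) (hfi : IntegrableOn f (Ioc b c)) (hs : s ⊆ Ioc b c)
    (heq : ∫ x in s, f x = ∫ x in Ioc b c, f x) :
    IsGLB s b := by
  refine ⟨fun x hx ↦ (hs hx).1.le, fun d hd ↦ ?_⟩
  by_contra! hbd
  have hgap : Ioo b (min c d) ⊆ Ioc b c := fun x hx ↦ ⟨hx.1, (hx.2.trans_le (min_le_left c d)).le⟩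
  have hdisj : Disjoint s (Ioo b (min c d)) :=
    disjoint_left.2 fun x hxs hx ↦ (hd hxs).not_gt (hx.2.trans_le (min_le_right c d))
  have hpos : 0 < volume (Ioo b (min c d)) := by simp [hbc, hbd]
  exact (setIntegral_lt_setIntegral_of_disjoint measurableSet_Ioc measurableSet_Ioo hf hfi hs
    hgap hdisj hpos).ne heq

theorem tendsto_nhdsLT_of_antitoneOn_of_isGLB {α β : Type*} [LinearOrder α] [TopologicalSpace α]
    [OrderTopology α] [LinearOrder β] [TopologicalSpace β] [OrderTopology β] {f : α → β}
    {c T : α} {b : β} (hcT : c < T) (hf : AntitoneOn f (Ico c T)) (hb : IsGLB (f '' Ico c T) b) :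
    Tendsto f (𝓝[<] T) (𝓝 b) := by
  refine tendsto_order.2 ⟨fun y hy ↦ ?_, fun y hy ↦ ?_⟩
  · filter_upwards [Ico_mem_nhdsLT hcT] with t ht
    exact hy.trans_le (hb.1 (mem_image_of_mem f ht))
  · obtain ⟨_, ⟨t₁, ht₁, rfl⟩, -, hlt⟩ := hb.exists_between hy
    filter_upwards [Ico_mem_nhdsLT ht₁.2] with t ht
    exact (hf ht₁ ⟨ht₁.1.trans ht.1, ht.2⟩ ht.1).trans_lt hlt

theorem strictAntiOn_of_forall_hasDerivWithinAt_neg {f f' : ℝ → ℝ} {s : Set ℝ} (hs : Convex ℝ s)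
    (hf : ∀ t ∈ s, HasDerivWithinAt f (f' t) s t) (hf' : ∀ t ∈ s, f' t < 0) :
    StrictAntiOn f s :=
  strictAntiOn_of_hasDerivWithinAt_neg hs (fun t ht ↦ (hf t ht).continuousWithinAt)
    (fun t ht ↦ (hf t (interior_subset ht)).mono interior_subset)
    (fun t ht ↦ hf' t (interior_subset ht))

theorem stmt2_general (a₀ t_s : ℝ) (ha₀ : 0 < a₀) (ψ a : ℝ → ℝ)
    (hψpos : ∀ x ∈ Ioc 0 a₀, 0 < ψ x)
    (hint : IntegrableOn (fun x => 1 / ψ x) (Ioo 0 a₀))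
    (hts : t_s = ∫ x in Ioo 0 a₀, 1 / ψ x)
    (ha_mem : ∀ t ∈ Ico 0 t_s, a t ∈ Ioc 0 a₀)
    (hode : ∀ t ∈ Ico 0 t_s, HasDerivWithinAt a (-ψ (a t)) (Ico 0 t_s) t) :
    Tendsto a (𝓝[<] t_s) (𝓝 0) := by
  have hψa : ∀ t ∈ Ico 0 t_s, 0 < ψ (a t) := fun t ht ↦ hψpos _ (ha_mem t ht)
  have hinv : ∀ x ∈ Ioc 0 a₀, 0 < 1 / ψ x := fun x hx ↦ one_div_pos.2 (hψpos x hx)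
  have hanti : StrictAntiOn a (Ico 0 t_s) :=
    strictAntiOn_of_forall_hasDerivWithinAt_neg (convex_Ico 0 t_s) hode
      fun t ht ↦ neg_neg_of_pos (hψa t ht)
  have hts_nonneg : 0 ≤ t_s :=
    hts ▸ setIntegral_nonneg measurableSet_Ioo fun x hx ↦ (hinv x (Ioo_subset_Ioc_self hx)).le
  have hspeed : ∀ t ∈ Ico 0 t_s, |-ψ (a t)| * (1 / ψ (a t)) = 1 := fun t ht ↦ by
    rw [abs_neg, abs_of_pos (hψa t ht), mul_one_div_cancel (hψa t ht).ne']
  have hrange : ∫ x in a '' Ico 0 t_s, 1 / ψ x = ∫ x in Ioc 0 a₀, 1 / ψ x := by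
    calc ∫ x in a '' Ico 0 t_s, 1 / ψ x
        = volume.real (Ico 0 t_s) :=
          setIntegral_image_eq_measureReal_of_abs_deriv_mul_eq_one measurableSet_Ico hode
            hanti.injOn hspeed
      _ = t_s := by rw [Real.volume_real_Ico_of_le hts_nonneg, sub_zero]
      _ = ∫ x in Ioc 0 a₀, 1 / ψ x := by rw [hts, integral_Ioc_eq_integral_Ioo]
  have hglb : IsGLB (a '' Ico 0 t_s) 0 :=
    isGLB_of_setIntegral_eq_setIntegral_Ioc ha₀ hinv
      ((integrableOn_Ioc_iff_integrableOn_Ioo (by finiteness)).2 hint)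
      (image_subset_iff.2 ha_mem) hrange
  have hts_pos : 0 < t_s := nonempty_Ico.1 hglb.nonempty.of_image
  exact tendsto_nhdsLT_of_antitoneOn_of_isGLB hts_pos hanti.antitoneOn hglb

/-- Converse direction of Theorem 1 of the paper (singularity formation): if `1/ψ`
is integrable on `(0, a₀)` and `t_s = ∫₀^{a₀} dx / ψ(x)`, then any solution
`a : [0, t_s) → (0, a₀]` of the collapse ODE `a' = -ψ(a)`, `a 0 = a₀`, tends to `0`
as `t → t_s⁻`, i.e. the spacetime becomes singular at the comoving time `t_s`. -/
theorem stmt2 (a₀ t_s : ℝ) (ha₀ : 0 < a₀)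
    (ψ a : ℝ → ℝ)
    (hψc : ContinuousOn ψ (Set.Ioc 0 a₀))
    (hψpos : ∀ x ∈ Set.Ioc 0 a₀, 0 < ψ x)
    (hint : MeasureTheory.IntegrableOn (fun x => 1 / ψ x) (Set.Ioo 0 a₀))
    (hts : t_s = ∫ x in Set.Ioo 0 a₀, 1 / ψ x)
    (ha_mem : ∀ t ∈ Set.Ico 0 t_s, a t ∈ Set.Ioc 0 a₀)
    (ha0 : a 0 = a₀)
    (hode : ∀ t ∈ Set.Ico 0 t_s,
      HasDerivWithinAt a (-ψ (a t)) (Set.Ico 0 t_s) t) :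
    Filter.Tendsto a (nhdsWithin t_s (Set.Iio t_s)) (nhds 0) := by
  exact stmt2_general a₀ t_s ha₀ ψ a hψpos hint hts ha_mem hode
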